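/- Let G be an abelian group and A a commutative G-graded ring (an internal direct sum decomposition A = ⊕_{g ∈ G} A_g with A_g · A_h ⊆ A_{g+h}) in which the product of any two nonzero homogeneous elements is nonzero (A is a G-domain). Let ℓ ∈ A_g be a nonzero homogeneous element and p ≥ 1 an integer, and set A' := A[X]/(X^p − ℓ). Then for any nonzero homogeneous elements a, b ∈ A and any integers 0 ≤ i, j < p, the product of the images of aX^i and bX^j in A' is nonzero. (Consequently A' is again a graded domain for the root-construction grading.) -/

import Mathlib

open Polynomial

/-- A nonzero monomial of degree `< p` is not divisible by the monic `X ^ p - C ℓ`. -/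
theorem root_aux {A : Type*} [CommRing A] (ℓ c : A) (hc : c ≠ 0) (p k : ℕ) (hk : k < p) :
    ¬ ((X : A[X]) ^ p - C ℓ ∣ C c * X ^ k) := by
  have : Nontrivial A := ⟨c, 0, hc⟩
  refine (monic_X_pow_sub_C ℓ (by omega)).not_dvd_of_degree_lt ?_ ?_
  · rw [C_mul_X_pow_eq_monomial]
    simpa using hc
  · rw [degree_X_pow_sub_C (by omega), degree_C_mul_X_pow k hc]
    exact_mod_cast hk

/-- Let `A` be a commutative `G`-graded ring which is a `G`-domain
(products of nonzero homogeneous elements are nonzero), let `ℓ ∈ A_g` be a nonzero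
homogeneous element and `p ≥ 1`, and let `A' = A[X]/(X^p − ℓ)` be the root construction.
Then for nonzero homogeneous `a, b ∈ A` and `0 ≤ i, j < p`, the product of the images of
`a X^i` and `b X^j` in `A'` is nonzero. -/
theorem root_construction_domain (G : Type*) [AddCommGroup G] [DecidableEq G]
    (A : Type*) [CommRing A] (𝒜 : G → AddSubgroup A) [GradedRing 𝒜]
    (hdom : ∀ (g h : G) (a b : A), a ∈ 𝒜 g → b ∈ 𝒜 h → a ≠ 0 → b ≠ 0 → a * b ≠ 0)
    (g : G) (ℓ : A) (hℓmem : ℓ ∈ 𝒜 g) (hℓ : ℓ ≠ 0) (p : ℕ) (hp : 1 ≤ p)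
    (g₁ g₂ : G) (a b : A) (hamem : a ∈ 𝒜 g₁) (hbmem : b ∈ 𝒜 g₂)
    (ha : a ≠ 0) (hb : b ≠ 0) (i j : ℕ) (hi : i < p) (hj : j < p) :
    (Ideal.Quotient.mk (Ideal.span {(X : A[X]) ^ p - C ℓ}) (C a * X ^ i)) *
      (Ideal.Quotient.mk (Ideal.span {(X : A[X]) ^ p - C ℓ}) (C b * X ^ j)) ≠ 0 := by
  rw [← map_mul, Ne, Ideal.Quotient.eq_zero_iff_mem, Ideal.mem_span_singleton]
  have hab : a * b ≠ 0 := hdom _ _ a b hamem hbmem ha hb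
  intro h
  by_cases hij : i + j < p
  · apply root_aux ℓ (a * b) hab p (i + j) hij
    convert h using 1
    rw [C_mul]; ring
  · obtain ⟨k, hk⟩ := Nat.exists_eq_add_of_le (not_lt.mp hij)
    have hablmem : a * b ∈ 𝒜 (g₁ + g₂) := SetLike.mul_mem_graded hamem hbmem
    apply root_aux ℓ (a * b * ℓ) (hdom _ _ _ _ hablmem hℓmem hab hℓ) p k (by omega)
    have h2 : C (a * b * ℓ) * X ^ k
        = (C a * X ^ i) * (C b * X ^ j) - ((X : A[X]) ^ p - C ℓ) * (C (a * b) * X ^ k) := by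
      have h3 : (C a * X ^ i) * (C b * X ^ j) = C a * C b * ((X : A[X]) ^ p * X ^ k) := by
        rw [← pow_add, ← hk, pow_add]; ring
      rw [h3]
      simp only [C_mul]; ring
    rw [h2]
    exact dvd_sub h (Dvd.intro _ rfl)
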